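/- arXiv:1508.01396 — 3 statements merged into one kernel-verified Lean document; each statement's English description precedes it below -/
import Mathlib

section
/- If a graph G admits a Kempe-coloring of size k with k ≤ 6, then G has a clique minor of size k (i.e., k pairwise disjoint, pairwise adjacent, connected nonempty vertex subsets). -/
open SimpleGraph

/-- `A` is an anticlique (independent set) of `G`. -/
def IsAnticlique {V : Type*} (G : SimpleGraph V) (A : Finset V) : Prop :=
  ∀ x ∈ A, ∀ y ∈ A, ¬ G.Adj x y

/-- A coloring of `G`: a partition of the vertex set into nonempty anticliques. -/
def IsColoring {V : Type*} (G : SimpleGraph V) (c : Finset (Finset V)) : Prop :=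
  (∀ A ∈ c, A.Nonempty) ∧
  (∀ A ∈ c, ∀ B ∈ c, A ≠ B → Disjoint A B) ∧
  (∀ v : V, ∃ A ∈ c, v ∈ A) ∧
  (∀ A ∈ c, IsAnticlique G A)

/-- `A` induces a connected subgraph of `G`. -/
def ConnSet {V : Type*} (G : SimpleGraph V) (A : Finset V) : Prop :=
  (G.induce (↑A : Set V)).Connected

/-- A Kempe-coloring: any two distinct classes induce a connected subgraph. -/
def IsKempe {V : Type*} [DecidableEq V] (G : SimpleGraph V) (c : Finset (Finset V)) : Prop :=
  IsColoring G c ∧ ∀ A ∈ c, ∀ B ∈ c, A ≠ B → ConnSet G (A ∪ B)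

/-- Two vertex sets are adjacent if some edge joins them. -/
def SetsAdj {V : Type*} (G : SimpleGraph V) (A B : Finset V) : Prop :=
  ∃ a ∈ A, ∃ b ∈ B, G.Adj a b

/-- A clique minor: pairwise disjoint, pairwise adjacent, nonempty connected subsets. -/
def IsCliqueMinor {V : Type*} (G : SimpleGraph V) (K : Finset (Finset V)) : Prop :=
  (∀ A ∈ K, A.Nonempty) ∧ (∀ A ∈ K, ConnSet G A) ∧
  (∀ A ∈ K, ∀ B ∈ K, A ≠ B → Disjoint A B ∧ SetsAdj G A B)

/-- A shallow clique minor: a clique minor all of whose branch sets have size 1 or 2. -/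
def IsShallowCliqueMinor {V : Type*} (G : SimpleGraph V) (K : Finset (Finset V)) : Prop :=
  IsCliqueMinor G K ∧ ∀ A ∈ K, A.card ≤ 2

/-- `T` is a transversal of the family `K`: it meets each member in exactly one vertex. -/
def Traversed {V : Type*} [DecidableEq V] (T : Finset V) (K : Finset (Finset V)) : Prop :=
  ∀ A ∈ K, (T ∩ A).card = 1

/-- `c` is a coloring of `G` of minimum size, i.e. of size `χ(G)`. -/
def MinColoring {V : Type*} (G : SimpleGraph V) (c : Finset (Finset V)) : Prop :=
  IsColoring G c ∧ ∀ d, IsColoring G d → c.card ≤ d.card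

/-- `G` has no antitriangle (independent set of size 3). -/
def HasNoAntitriangle {V : Type*} (G : SimpleGraph V) : Prop :=
  ¬ ∃ A : Finset V, A.card = 3 ∧ IsAnticlique G A

namespace KM
open Classical

variable {V : Type*} [Fintype V]

/-- connectivity through closed predicates -/
def Cn (H : SimpleGraph V) (B : Finset V) : Prop :=
  B.Nonempty ∧ ∀ P : V → Prop, (∀ a ∈ B, ∀ b ∈ B, H.Adj a b → P a → P b) →
    ∀ a ∈ B, ∀ b ∈ B, P a → P b

def Model (t : ℕ) (H : SimpleGraph V) (S : Finset V) : Prop :=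
  ∃ B : Fin t → Finset V, (∀ i, B i ⊆ S) ∧ (∀ i, Cn H (B i)) ∧
    ∀ i j, i ≠ j → Disjoint (B i) (B j) ∧ ∃ a ∈ B i, ∃ b ∈ B j, H.Adj a b

noncomputable def E (H : SimpleGraph V) : Finset (V × V) :=
  Finset.univ.filter (fun p => H.Adj p.1 p.2)

noncomputable def nb (H : SimpleGraph V) (v : V) : Finset V :=
  Finset.univ.filter (fun w => H.Adj v w)

lemma mem_E (H : SimpleGraph V) (p : V × V) : p ∈ E H ↔ H.Adj p.1 p.2 := by simp [E]
lemma mem_nb (H : SimpleGraph V) (v w : V) : w ∈ nb H v ↔ H.Adj v w := by simp [nb]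

lemma cn_single (H : SimpleGraph V) (v : V) : Cn H {v} := by
  refine ⟨by simp, ?_⟩
  intro P _ a ha b hb
  simp at ha hb
  subst ha; subst hb; exact id

lemma Model.mono {t : ℕ} {H H' : SimpleGraph V} {S S' : Finset V} (h : Model t H S)
    (hH : ∀ a b, H.Adj a b → H'.Adj a b) (hS : S ⊆ S') : Model t H' S' := by
  obtain ⟨B, h1, h2, h3⟩ := h
  refine ⟨B, fun i => (h1 i).trans hS, fun i => ⟨(h2 i).1, fun P hP => (h2 i).2 P ?_⟩, ?_⟩
  · intro a ha b hb hab
    exact hP a ha b hb (hH _ _ hab)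
  · intro i j hij
    obtain ⟨hd, a, ha, b, hb, hab⟩ := h3 i j hij
    exact ⟨hd, a, ha, b, hb, hH _ _ hab⟩

lemma model_inj {t : ℕ} (H : SimpleGraph V) (S : Finset V) (g : Fin t → V)
    (hS : ∀ i, g i ∈ S) (hg : ∀ i j, i ≠ j → H.Adj (g i) (g j)) : Model t H S := by
  refine ⟨fun i => {g i}, by simpa using hS, fun i => cn_single _ _, ?_⟩
  intro i j hij
  refine ⟨?_, g i, by simp, g j, by simp, hg i j hij⟩
  simpa using (hg i j hij).ne

lemma sum_nb (H : SimpleGraph V) (S : Finset V) (hS : ∀ a b, H.Adj a b → a ∈ S) :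
    (E H).card = ∑ v ∈ S, (nb H v).card := by
  rw [Finset.card_eq_sum_card_fiberwise (f := Prod.fst) (t := S)]
  · apply Finset.sum_congr rfl
    intro v _
    symm
    apply Finset.card_bij (fun w _ => (v, w))
    · intro w hw; simpa [mem_E, mem_nb] using hw
    · intro a _ b _ h; simpa using h
    · rintro ⟨a, b⟩ h
      simp [mem_E] at h
      obtain ⟨h, rfl⟩ := h
      exact ⟨b, by simpa [mem_nb] using h, rfl⟩
  · rintro ⟨a, b⟩ h
    have h := (mem_E H _).1 h
    exact hS a b h

def restr (H : SimpleGraph V) (N : Finset V) : SimpleGraph V where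
  Adj a b := H.Adj a b ∧ a ∈ N ∧ b ∈ N
  symm := ⟨fun _ _ h => ⟨h.1.symm, h.2.2, h.2.1⟩⟩
  loopless := ⟨fun a h => H.loopless.irrefl a h.1⟩

noncomputable def cf (x y : V) (v : V) : V := if v = y then x else v

noncomputable def contr (H : SimpleGraph V) (x y : V) : SimpleGraph V where
  Adj a b := a ≠ b ∧ ∃ a' b', H.Adj a' b' ∧ cf x y a' = a ∧ cf x y b' = b
  symm := ⟨fun _ _ h => ⟨h.1.symm, by
    obtain ⟨_, a, b, h, h1, h2⟩ := h
    exact ⟨b, a, h.symm, h2, h1⟩⟩⟩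
  loopless := ⟨fun a h => h.1 rfl⟩

lemma contr_model {t : ℕ} {H : SimpleGraph V} {S : Finset V} {x y : V} (hxy : H.Adj x y)
    (hx : x ∈ S) (hy : y ∈ S) (h : Model t (contr H x y) (S.erase y)) : Model t H S := by
  obtain ⟨B, h1, h2, h3⟩ := h
  have key : ∀ i v, v ∈ B i → cf x y v = v := by
    intro i v hv
    have := h1 i hv
    simp at this
    simp [cf, this.1]
  refine ⟨fun i => Finset.univ.filter (fun v => cf x y v ∈ B i), ?_, ?_, ?_⟩
  · intro i v hv
    simp at hv
    by_cases h : v = y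
    · rw [h]; exact hy
    · have := h1 i hv
      simp [cf, h] at this
      exact this
  · intro i
    obtain ⟨⟨z, hz⟩, hc⟩ := h2 i
    refine ⟨⟨z, by simp [key i z hz, hz]⟩, ?_⟩
    intro P hP
    have hPf : ∀ v, cf x y v ∈ B i → (P v ↔ P (cf x y v)) := by
      intro v hv
      by_cases h : v = y
      · subst h
        have e : cf x v v = x := by simp [cf]
        have e2 : cf x v x = x := by simp [cf]
        rw [e] at hv ⊢
        constructor
        · exact hP v (by simp [e, hv]) x (by simp [e2, hv]) hxy.symm
        · exact hP x (by simp [e2, hv]) v (by simp [e, hv]) hxy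
      · simp [cf, h]
    intro a ha b hb hPa
    simp at ha hb
    rw [hPf b hb]
    refine hc P ?_ _ ha _ hb ((hPf a ha).1 hPa)
    rintro p hp q hq ⟨_, a', b', hab, rfl, rfl⟩ h
    rw [← hPf b' hq]
    rw [← hPf a' hp] at h
    exact hP a' (by simpa using hp) b' (by simpa using hq) hab h
  · intro i j hij
    obtain ⟨hd, a, ha, b, hb, _, a', b', hab, rfl, rfl⟩ := h3 i j hij
    refine ⟨?_, a', by simpa using ha, b', by simpa using hb, hab⟩
    rw [Finset.disjoint_left] at hd ⊢
    intro v hv hv'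
    simp at hv hv'
    exact hd hv hv'

lemma contr_card {H : SimpleGraph V} {x y : V} (hxy : H.Adj x y) :
    (E H).card ≤ (E (contr H x y)).card + 2 + 2 * (nb H x ∩ nb H y).card := by
  set C := nb H x ∩ nb H y
  set X : Finset (V × V) := ({(x, y), (y, x)} ∪ ({y} ×ˢ C)) ∪ (C ×ˢ {y})
  have hX : X.card ≤ 2 + 2 * C.card := by
    have a1 := Finset.card_union_le ({(x, y), (y, x)} ∪ ({y} ×ˢ C)) (C ×ˢ {y})
    have a2 := Finset.card_union_le ({(x, y), (y, x)} : Finset (V × V)) ({y} ×ˢ C)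
    have a3 : ({(x, y), (y, x)} : Finset (V × V)).card ≤ 2 := Finset.card_le_two
    simp only [Finset.card_product, Finset.card_singleton] at a1 a2
    change X.card ≤ _ at a1
    omega
  have hY : (E H \ X).card ≤ (E (contr H x y)).card := by
    have hne := hxy.ne
    apply Finset.card_le_card_of_injOn (fun p => (cf x y p.1, cf x y p.2))
    · rintro ⟨a, b⟩ h
      simp [mem_E, X, C, mem_nb] at h
      obtain ⟨h, h'⟩ := h
      have := h.ne
      have := h.symm
      simp only [Finset.mem_coe, mem_E]
      refine ⟨?_, a, b, h, rfl, rfl⟩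
      simp only [cf]
      grind
    · rintro ⟨a, b⟩ h ⟨a', b'⟩ h' heq
      simp [mem_E, X, C, mem_nb] at h h' heq
      obtain ⟨h, h1⟩ := h
      obtain ⟨h', h1'⟩ := h'
      have := h.ne
      have := h'.ne
      have := h.symm
      have := h'.symm
      simp only [cf] at heq
      grind
  have := Finset.card_le_card_sdiff_add_card (s := E H) (t := X)
  omega

lemma model_cons {t : ℕ} {H : SimpleGraph V} {S : Finset V} {v : V} (hv : v ∈ S)
    (hS : ∀ a b, H.Adj a b → a ∈ S)
    (h : Model t (restr H (nb H v)) (nb H v)) : Model (t + 1) H S := by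
  obtain ⟨B, h1, h2, h3⟩ := h.mono (H' := H) (fun a b h => h.1) subset_rfl
  have hnv : ∀ i, v ∉ B i := fun i hi => by
    have := h1 i hi
    simp [mem_nb] at this
  refine ⟨Fin.cons {v} B, ?_, ?_, ?_⟩
  · intro i
    refine Fin.cases ?_ ?_ i
    · simpa using hv
    · intro i w hw
      simp at hw
      have := h1 i hw
      rw [mem_nb] at this
      exact hS _ _ this.symm
  · intro i
    refine Fin.cases ?_ ?_ i
    · simpa using cn_single H v
    · intro i; simpa using h2 i
  · intro i j
    refine Fin.cases ?_ ?_ i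
    · refine Fin.cases ?_ ?_ j
      · simp
      · intro j _
        obtain ⟨w, hw⟩ := (h2 j).1
        have := h1 j hw
        rw [mem_nb] at this
        simp only [Fin.cons_zero, Fin.cons_succ]
        exact ⟨by simpa using hnv j, v, by simp, w, hw, this⟩
    · intro i
      refine Fin.cases ?_ ?_ j
      · intro _
        obtain ⟨w, hw⟩ := (h2 i).1
        have := h1 i hw
        rw [mem_nb] at this
        simp only [Fin.cons_zero, Fin.cons_succ]
        exact ⟨by simpa using hnv i, w, hw, v, by simp, this.symm⟩
      · intro j hij
        simp only [Fin.cons_succ]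
        exact h3 i j (fun h => hij (by rw [h]))

def Ext (V : Type*) [Fintype V] (α β m t : ℕ) : Prop :=
  ∀ (H : SimpleGraph V) (S : Finset V), (∀ a b, H.Adj a b → a ∈ S) → m ≤ S.card →
    2 * α * S.card ≤ (E H).card + 2 * β → Model t H S

lemma step (α β m t : ℕ) (hm : β ≤ α * m)  (hm0 : 1 ≤ m) (hα : 1 ≤ α)
    (base : ∀ (H : SimpleGraph V) (S : Finset V), (∀ a b, H.Adj a b → a ∈ S) → S.card = m →
      2 * α * S.card ≤ (E H).card + 2 * β → Model (t + 1) H S)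
    (nbh : ∀ (H : SimpleGraph V) (N : Finset V), (∀ a b, H.Adj a b → a ∈ N) → N.Nonempty →
      (1 ≤ β → N.card < 2 * α) → (∀ v ∈ N, α ≤ (nb H v).card) → Model t H N) :
    Ext V α β m (t + 1) := by
  suffices ∀ (k : ℕ) (H : SimpleGraph V) (S : Finset V), S.card + (E H).card = k →
      (∀ a b, H.Adj a b → a ∈ S) → m ≤ S.card →
      2 * α * S.card ≤ (E H).card + 2 * β → Model (t + 1) H S from
    fun H S h1 h2 h3 => this _ H S rfl h1 h2 h3
  intro k
  induction k using Nat.strong_induction_on with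
  | _ k ih =>
  intro H S hk hS hmS hE
  by_cases hbase : S.card = m
  · exact base H S hS hbase hE
  have hmS' : m + 1 ≤ S.card := by omega
  by_cases hbig : 2 * α * S.card + 2 ≤ (E H).card + 2 * β
  · have : β ≤ α * S.card := hm.trans (Nat.mul_le_mul_left _ hmS)
    have hpos : 0 < (E H).card := by
      have : 2 * α * S.card = 2 * (α * S.card) := by ring
      omega
    obtain ⟨⟨x, y⟩, hxy⟩ := Finset.card_pos.1 hpos
    rw [mem_E] at hxy
    simp only at hxy
    have hEE : E (H.deleteEdges {s(x, y)}) = E H \ {(x, y), (y, x)} := by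
      ext ⟨a, b⟩
      simp [mem_E]
    have hc : (E (H.deleteEdges {s(x, y)})).card + 2 = (E H).card := by
      rw [hEE, Finset.card_sdiff_of_subset, Finset.card_pair]
      · have : ({(x, y), (y, x)} : Finset (V × V)).card ≤ (E H).card := by
          apply Finset.card_le_card
          intro p hp
          simp at hp
          rcases hp with rfl | rfl <;> simp [mem_E, hxy, hxy.symm]
        rw [Finset.card_pair] at this
        · omega
        · simp [hxy.ne]
      · simp [hxy.ne]
      · intro p hp
        simp at hp
        rcases hp with rfl | rfl <;> simp [mem_E, hxy, hxy.symm]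
    have := ih (S.card + (E (H.deleteEdges {s(x, y)})).card) (by omega)
      (H.deleteEdges {s(x, y)}) S rfl (fun a b h => hS a b (by simp at h; exact h.1)) hmS (by omega)
    exact this.mono (fun a b h => by simp at h; exact h.1) subset_rfl
  have hmulerase : ∀ y ∈ S, 2 * α * (S.erase y).card + 2 * α = 2 * α * S.card := by
    intro y hy
    rw [← Finset.card_erase_add_one hy]; ring
  by_cases hcom : ∃ x y, H.Adj x y ∧ (nb H x ∩ nb H y).card < α
  · obtain ⟨x, y, hxy, hlt⟩ := hcom
    have hx := hS x y hxy
    have hy := hS y x hxy.symm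
    have h1 := contr_card hxy
    have h2 : (E (contr H x y)).card ≤ (E H).card := by
      apply Finset.card_le_card_of_surjOn (fun p => (cf x y p.1, cf x y p.2))
      rintro ⟨a, b⟩ h
      obtain ⟨_, a', b', h', rfl, rfl⟩ := (mem_E _ _).1 h
      exact ⟨(a', b'), by simpa [mem_E] using h', rfl⟩
    have h3 := Finset.card_erase_add_one hy
    have h4 := hmulerase y hy
    apply contr_model hxy hx hy
    apply ih _ _ (contr H x y) (S.erase y) rfl
    · rintro a b ⟨_, a', b', h, rfl, rfl⟩
      have := hS _ _ h
      have := hxy.ne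
      simp only [cf]
      split_ifs <;> simp [*]
    · omega
    · omega
    · omega
  push Not at hcom
  have hne : S.Nonempty := Finset.card_pos.1 (by omega)
  obtain ⟨v, hv, hmin⟩ := Finset.exists_min_image S (fun v => (nb H v).card) hne
  by_cases h0 : (nb H v) = ∅
  · have h3 := Finset.card_erase_add_one hv
    have h4 := hmulerase v hv
    refine (ih _ ?_ H (S.erase v) rfl ?_ ?_ ?_).mono (fun _ _ h => h) (Finset.erase_subset _ _)
    · omega
    · intro a b hab
      refine Finset.mem_erase.2 ⟨?_, hS a b hab⟩
      rintro rfl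
      have : b ∈ nb H a := by rw [mem_nb]; exact hab
      rw [h0] at this
      simp at this
    · omega
    · omega
  · apply model_cons hv hS
    apply nbh
    · intro a b h; exact h.2.1
    · exact Finset.nonempty_iff_ne_empty.2 h0
    · intro hβ
      have hs := sum_nb H S hS
      have hs2 := Finset.card_nsmul_le_sum S _ _ hmin
      rw [← hs, smul_eq_mul] at hs2
      by_contra hcon
      push Not at hcon
      have := Nat.mul_le_mul_left S.card hcon
      have h5 : S.card * (2 * α) = 2 * α * S.card := by ring
      omega
    · intro w hw
      rw [mem_nb] at hw
      have := hcom v w hw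
      refine this.trans (Finset.card_le_card ?_)
      intro z hz
      simp [mem_nb] at hz
      simp [mem_nb, restr, hz, hw]

lemma card_E_le (H : SimpleGraph V) (S : Finset V) (hS : ∀ a b, H.Adj a b → a ∈ S) :
    E H ⊆ S.offDiag := by
  rintro ⟨a, b⟩ h
  rw [mem_E] at h
  simp only at h
  simp [Finset.mem_offDiag, hS a b h, hS b a h.symm, h.ne]

lemma deg_sum (H : SimpleGraph V) (N : Finset V) (hS : ∀ a b, H.Adj a b → a ∈ N) (α : ℕ)
    (h : ∀ v ∈ N, α ≤ (nb H v).card) (hN : N.Nonempty) :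
    α * N.card ≤ (E H).card ∧ α + 1 ≤ N.card := by
  constructor
  · rw [sum_nb H N hS]
    have := Finset.card_nsmul_le_sum N _ _ h
    rw [smul_eq_mul] at this
    linarith
  · obtain ⟨v, hv⟩ := hN
    have h1 := h v hv
    have : nb H v ⊆ N.erase v := by
      intro w hw
      rw [mem_nb] at hw
      simp [hS _ _ hw.symm, hw.ne']
    have h2 := Finset.card_le_card this
    have := Finset.card_erase_add_one hv
    omega

lemma even_E (H : SimpleGraph V) : ∃ q, (E H).card = 2 * q := by
  refine ⟨H.edgeFinset.card, ?_⟩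
  · rw [sum_nb H Finset.univ (by simp), ← H.sum_degrees_eq_twice_card_edges]
    apply Finset.sum_congr rfl
    intro v _
    rw [← SimpleGraph.card_neighborFinset_eq_degree]
    congr 1
    ext w
    simp [mem_nb]

lemma model2 (H : SimpleGraph V) (S : Finset V) (hS : ∀ a b, H.Adj a b → a ∈ S) {x y : V}
    (hxy : H.Adj x y) : Model 2 H S := by
  refine model_inj H S ![x, y] ?_ ?_
  · intro i; fin_cases i
    · exact hS _ _ hxy
    · exact hS _ _ hxy.symm
  · intro i j hij
    fin_cases i <;> fin_cases j <;> simp_all [hxy.symm]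

lemma ext3 : Ext V 1 0 2 3 := by
  apply step 1 0 2 2 (by norm_num) (by norm_num) (by norm_num)
  · intro H S hS hc hE
    have := Finset.card_le_card (card_E_le H S hS)
    rw [Finset.offDiag_card, hc] at this
    omega
  · intro H N hN hne _ hd
    obtain ⟨v, hv⟩ := hne
    obtain ⟨w, hw⟩ := Finset.card_pos.1 (hd v hv)
    rw [mem_nb] at hw
    exact model2 H N hN hw

lemma ext4 : Ext V 2 2 3 4 := by
  apply step 2 2 3 3 (by norm_num) (by norm_num) (by norm_num)
  · intro H S hS hc hE
    have := Finset.card_le_card (card_E_le H S hS)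
    rw [Finset.offDiag_card, hc] at this
    omega
  · intro H N hN hne _ hd
    have := deg_sum H N hN _ hd hne
    exact ext3 H N hN (by omega) (by omega)

lemma ext5 : Ext V 3 5 4 5 := by
  apply step 3 5 4 4 (by norm_num) (by norm_num) (by norm_num)
  · intro H S hS hc hE
    have := Finset.card_le_card (card_E_le H S hS)
    rw [Finset.offDiag_card, hc] at this
    omega
  · intro H N hN hne hlt hd
    have := deg_sum H N hN _ hd hne
    have hev := even_E H
    exact ext4 H N hN (by omega) (by omega)

lemma ext6 : Ext V 5 15 6 6 := by
  apply step 5 15 6 5 (by norm_num) (by norm_num) (by norm_num)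
  · intro H S hS hc hE
    have h1 := card_E_le H S hS
    have h2 : E H = S.offDiag := by
      apply Finset.eq_of_subset_of_card_le h1
      rw [Finset.offDiag_card, hc]
      omega
    let e := (Finset.equivFinOfCardEq hc).symm
    refine model_inj H S (fun i => (e i : V)) (fun i => (e i).2) ?_
    intro i j hij
    have : ((e i : V), (e j : V)) ∈ E H := by
      rw [h2, Finset.mem_offDiag]
      refine ⟨(e i).2, (e j).2, ?_⟩
      intro h
      exact hij (e.injective (Subtype.ext h))
    exact (mem_E _ _).1 this
  · intro H N hN hne hlt hd
    have := deg_sum H N hN _ hd hne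
    exact ext5 H N hN (by omega) (by omega)

lemma cn_conn {H : SimpleGraph V} {B : Finset V} (h : Cn H B) : ConnSet H B := by
  obtain ⟨⟨z, hz⟩, hc⟩ := h
  haveI : Nonempty (↑B : Set V) := ⟨⟨z, hz⟩⟩
  refine ⟨?_⟩
  rintro ⟨a, ha⟩ ⟨b, hb⟩
  have := hc (fun v => ∃ hv : v ∈ (↑B : Set V), (H.induce (↑B : Set V)).Reachable ⟨a, ha⟩ ⟨v, hv⟩)
    ?_ a ha b hb ⟨ha, .rfl⟩
  · exact this.2
  · rintro p hp q hq hpq ⟨_, h⟩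
    exact ⟨hq, h.trans (SimpleGraph.Adj.reachable (by simpa using hpq))⟩

noncomputable def EE (H : SimpleGraph V) (A B : Finset V) : Finset (V × V) :=
  (A ×ˢ B).filter (fun p => H.Adj p.1 p.2)

lemma pair_count {H : SimpleGraph V} {A B : Finset V} (hA : IsAnticlique H A)
    (hB : IsAnticlique H B) (hd : Disjoint A B) (hc : ConnSet H (A ∪ B)) :
    A.card + B.card ≤ (EE H A B).card + 1 := by
  have h1 := SimpleGraph.Connected.card_vert_le_card_edgeSet_add_one hc
  have h2 : Nat.card ((↑(A ∪ B) : Set V)) = A.card + B.card := by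
    rw [← Finset.card_union_of_disjoint hd]
    simp [Nat.card_eq_fintype_card]
  rw [h2] at h1
  refine h1.trans (Nat.add_le_add_right ?_ 1)
  rw [← Nat.card_eq_finsetCard]
  refine Nat.card_le_card_of_surjective
    (fun p : (EE H A B) => (⟨s(⟨p.1.1, ?_⟩, ⟨p.1.2, ?_⟩), ?_⟩ :
      (H.induce (↑(A ∪ B) : Set V)).edgeSet)) ?_
  · have := p.2; simp [EE] at this; simp [this]
  · have := p.2; simp [EE] at this; simp [this]
  · have := p.2; simp [EE] at this; simp [this]
  · rintro ⟨e, he⟩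
    induction e using Sym2.ind with
    | _ a b =>
    obtain ⟨a, ha⟩ := a
    obtain ⟨b, hb⟩ := b
    have hab : H.Adj a b := by simpa using he
    have ha' : a ∈ A ∨ a ∈ B := by simpa using ha
    have hb' : b ∈ A ∨ b ∈ B := by simpa using hb
    rcases ha' with h | h <;> rcases hb' with h' | h'
    · exact absurd hab (hA _ h _ h')
    · exact ⟨⟨(a, b), by simp [EE, h, h', hab]⟩, rfl⟩
    · refine ⟨⟨(b, a), by simp [EE, h, h', hab.symm]⟩, ?_⟩
      apply Subtype.ext
      exact Sym2.eq_swap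
    · exact absurd hab (hB _ h _ h')

lemma kempe_count {H : SimpleGraph V} {c : Finset (Finset V)} (hk : IsKempe H c) :
    c.card ≤ Fintype.card V ∧
    2 * c.card * Fintype.card V + c.card ≤ (E H).card + c.card * c.card + 2 * Fintype.card V := by
  obtain ⟨⟨h1, h2, h3, h4⟩, h5⟩ := hk
  have hpd : (↑c : Set (Finset V)).PairwiseDisjoint id := by
    intro A hA B hB hAB
    exact h2 A hA B hB hAB
  have hU : c.biUnion id = Finset.univ := by
    ext v; simpa using h3 v
  have hn : Fintype.card V = ∑ A ∈ c, A.card := by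
    rw [← Finset.card_univ, ← hU, Finset.card_biUnion hpd]; rfl
  constructor
  · rw [hn, Finset.card_eq_sum_ones]
    exact Finset.sum_le_sum (fun A hA => Finset.card_pos.2 (h1 A hA))
  have hE : ∑ p ∈ c.offDiag, (EE H p.1 p.2).card ≤ (E H).card := by
    rw [← Finset.card_biUnion]
    · apply Finset.card_le_card
      intro p hp
      simp [EE] at hp
      rw [mem_E]
      obtain ⟨_, _, _, hp⟩ := hp
      exact hp.2
    · rintro ⟨A, B⟩ hp ⟨A', B'⟩ hq hne
      simp only [Finset.mem_coe, Finset.mem_offDiag] at hp hq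
      simp only [Function.onFun]
      rw [Finset.disjoint_left]
      rintro ⟨a, b⟩ ha hb
      simp [EE] at ha hb
      apply hne
      have e1 : A = A' := by
        by_contra h
        exact Finset.disjoint_left.1 (h2 A hp.1 A' hq.1 h) ha.1.1 hb.1.1
      have e2 : B = B' := by
        by_contra h
        exact Finset.disjoint_left.1 (h2 B hp.2.1 B' hq.2.1 h) ha.1.2 hb.1.2
      rw [e1, e2]
  have hP : ∑ p ∈ c.offDiag, (p.1.card + p.2.card) ≤
      ∑ p ∈ c.offDiag, ((EE H p.1 p.2).card + 1) := by
    apply Finset.sum_le_sum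
    rintro ⟨A, B⟩ hp
    simp only [Finset.mem_offDiag] at hp
    exact pair_count (h4 A hp.1) (h4 B hp.2.1) (h2 A hp.1 B hp.2.1 hp.2.2) (by
      have := h5 A hp.1 B hp.2.1 hp.2.2
      convert this)
  have hall : ∑ p ∈ c ×ˢ c, (p.1.card + p.2.card) = 2 * c.card * Fintype.card V := by
    rw [Finset.sum_product]
    simp only [Finset.sum_add_distrib, Finset.sum_const, smul_eq_mul, ← hn, ← Finset.mul_sum]
    ring
  have hsplit : ∑ p ∈ c ×ˢ c, (p.1.card + p.2.card) =
      ∑ p ∈ c.diag, (p.1.card + p.2.card) + ∑ p ∈ c.offDiag, (p.1.card + p.2.card) := by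
    rw [← Finset.diag_union_offDiag, Finset.sum_union (Finset.disjoint_diag_offDiag c)]
  have hdiag : ∑ p ∈ c.diag, (p.1.card + p.2.card) = 2 * Fintype.card V := by
    rw [Finset.sum_diag, hn, Finset.mul_sum]
    apply Finset.sum_congr rfl; intros; ring
  have hQ : ∑ p ∈ c.offDiag, ((EE H p.1 p.2).card + 1) =
      ∑ p ∈ c.offDiag, (EE H p.1 p.2).card + (c.card * c.card - c.card) := by
    rw [Finset.sum_add_distrib, Finset.sum_const, smul_eq_mul, mul_one, Finset.offDiag_card]
  have : c.card ≤ c.card * c.card := Nat.le_mul_self _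
  omega

lemma kempe_model {H : SimpleGraph V} {c : Finset (Finset V)} {k : ℕ} (hk : IsKempe H c)
    (hc : c.card = k) (h6 : k ≤ 6) : Model k H Finset.univ := by
  obtain ⟨h1, h2⟩ := kempe_count hk
  rw [hc] at h1 h2
  have hS : ∀ a b, H.Adj a b → a ∈ (Finset.univ : Finset V) := by simp
  interval_cases k
  · exact model_inj H _ Fin.elim0 (fun i => i.elim0) (fun i => i.elim0)
  · haveI : Nonempty V := Fintype.card_pos_iff.1 h1
    refine model_inj H _ (fun _ => Classical.arbitrary V) (by simp) ?_
    intro i j hij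
    exact absurd (Subsingleton.elim i j) hij
  · have : 0 < (E H).card := by omega
    obtain ⟨p, hp⟩ := Finset.card_pos.1 this
    exact model2 H _ hS ((mem_E _ _).1 hp)
  · apply ext3 H _ hS <;> rw [Finset.card_univ] <;> omega
  · apply ext4 H _ hS <;> rw [Finset.card_univ] <;> omega
  · apply ext5 H _ hS <;> rw [Finset.card_univ] <;> omega
  · apply ext6 H _ hS <;> rw [Finset.card_univ] <;> omega

end KM

/-- a Kempe-coloring of size `k ≤ 6` forces a clique minor of size `k`. -/
theorem kempe_le_six_clique_minor {V : Type*} [Fintype V] [DecidableEq V]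
    (G : SimpleGraph V) (c : Finset (Finset V)) (k : ℕ)
    (hk : IsKempe G c) (hcard : c.card = k) (hk6 : k ≤ 6) :
    ∃ K : Finset (Finset V), IsCliqueMinor G K ∧ K.card = k := by
  have hk' : @IsKempe V (Classical.decEq V) G c := by
    convert hk
  obtain ⟨B, _, h2, h3⟩ := KM.kempe_model (by convert hk) hcard hk6
  have hinj : Function.Injective B := by
    intro i j hij
    by_contra hne
    have hd := (h3 i j hne).1
    rw [hij] at hd
    have := (h2 j).1
    simp at hd
    simp [hd] at this
  refine ⟨Finset.univ.map ⟨B, hinj⟩, ⟨?_, ?_, ?_⟩, by simp⟩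
  · intro A hA
    simp at hA
    obtain ⟨i, rfl⟩ := hA
    exact (h2 i).1
  · intro A hA
    simp at hA
    obtain ⟨i, rfl⟩ := hA
    exact KM.cn_conn (h2 i)
  · intro A hA A' hA' hne
    simp at hA hA'
    obtain ⟨i, rfl⟩ := hA
    obtain ⟨j, rfl⟩ := hA'
    exact h3 i j (fun h => hne (by rw [h]))
end

section
/- If M is the only perfect matching of a nonempty graph G, then M contains a bridge of G. -/
open SimpleGraph

namespace Kotzig

/-- Alternating path, encoded by the list of tails of its matching darts. -/
def AP {V : Type*} (G : SimpleGraph V) (m : V → V) (l : List V) : Prop :=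
  l.IsChain (fun a b => G.Adj (m a) b) ∧ l.Nodup ∧ ∀ a ∈ l, m a ∉ l

/-- Vertices reachable by alternating paths. -/
def Rch {V : Type*} (G : SimpleGraph V) (m : V → V) (c : V) : Set V :=
  {y | ∃ l, AP G m l ∧ l.head? = some c ∧ y ∈ l}

/-- No alternating cycle. -/
def NoCyc {V : Type*} (G : SimpleGraph V) (m : V → V) : Prop :=
  ∀ l c e, AP G m l → l.head? = some c → l.getLast? = some e → e ≠ c → ¬ G.Adj (m e) c

theorem exists_first {α : Type*} (P : α → Prop) (l : List α) (h : ∃ y ∈ l, P y) :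
    ∃ l1 y l2, l = l1 ++ y :: l2 ∧ P y ∧ ∀ a ∈ l1, ¬ P a := by
  induction l with
  | nil => simp at h
  | cons x l ih =>
    by_cases hx : P x
    · exact ⟨[], x, l, rfl, hx, by simp⟩
    · obtain ⟨l1, y, l2, rfl, h2, h3⟩ := ih (by
        obtain ⟨y, hy, hP⟩ := h
        rcases List.mem_cons.1 hy with rfl | hy
        · exact absurd hP hx
        · exact ⟨y, hy, hP⟩)
      refine ⟨x :: l1, y, l2, rfl, h2, ?_⟩
      intro a ha
      rcases List.mem_cons.1 ha with rfl | ha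
      · exact hx
      · exact h3 a ha

theorem exists_last {α : Type*} (P : α → Prop) (l : List α) (h : ∃ y ∈ l, P y) :
    ∃ l1 y l2, l = l1 ++ y :: l2 ∧ P y ∧ ∀ a ∈ l2, ¬ P a := by
  obtain ⟨l1, y, l2, h1, h2, h3⟩ := exists_first P l.reverse (by simpa using h)
  refine ⟨l2.reverse, y, l1.reverse, ?_, h2, by simpa using h3⟩
  have := congrArg List.reverse h1
  simpa using this

section
variable {V : Type*} {G : SimpleGraph V} {m : V → V}

theorem AP.append (hm : ∀ v, m (m v) = v) {l1 l2 : List V} (h1 : AP G m l1) (h2 : AP G m l2)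
    (hd : ∀ a ∈ l2, a ∉ l1 ∧ m a ∉ l1)
    (hj : ∀ x ∈ l1.getLast?, ∀ y ∈ l2.head?, G.Adj (m x) y) : AP G m (l1 ++ l2) := by
  refine ⟨List.isChain_append.2 ⟨h1.1, h2.1, hj⟩, ?_, ?_⟩
  · rw [List.nodup_append]
    refine ⟨h1.2.1, h2.2.1, ?_⟩
    rintro a ha b hb rfl
    exact (hd a hb).1 ha
  · intro a ha hb
    rw [List.mem_append] at ha hb
    rcases ha with ha | ha <;> rcases hb with hb | hb
    · exact h1.2.2 a ha hb
    · exact (hd _ hb).2 (by rwa [hm])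
    · exact (hd _ ha).2 hb
    · exact h2.2.2 a ha hb

theorem AP.left {l1 l2 : List V} (h : AP G m (l1 ++ l2)) : AP G m l1 := by
  refine ⟨(List.isChain_append.1 h.1).1, (List.nodup_append.1 h.2.1).1, ?_⟩
  intro a ha hb
  exact h.2.2 a (by simp [ha]) (by simp [hb])

theorem AP.right {l1 l2 : List V} (h : AP G m (l1 ++ l2)) : AP G m l2 := by
  refine ⟨(List.isChain_append.1 h.1).2.1, (List.nodup_append.1 h.2.1).2.1, ?_⟩
  intro a ha hb
  exact h.2.2 a (by simp [ha]) (by simp [hb])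

theorem AP.rev (hm : ∀ v, m (m v) = v) {l : List V} (h : AP G m l) :
    AP G m (l.map m).reverse := by
  have hinj : Function.Injective m := Function.LeftInverse.injective hm
  refine ⟨?_, ?_, ?_⟩
  · rw [List.isChain_reverse, List.isChain_map]
    refine h.1.imp ?_
    intro a b hab
    rw [hm]; exact hab.symm
  · rw [List.nodup_reverse]; exact h.2.1.map hinj
  · intro a ha hb
    simp only [List.mem_reverse, List.mem_map] at ha hb
    obtain ⟨x, hx, rfl⟩ := ha
    obtain ⟨y, hy, hxy⟩ := hb
    have := hinj hxy
    subst this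
    exact h.2.2 x hx hy

set_option maxHeartbeats 1000000 in
theorem descent (hm : ∀ v, m (m v) = v) (hnc : NoCyc G m) (c : V) (n : ℕ) :
    ∀ (l : List V) (e : V) (Q : List V), Q.length = n → AP G m l → l.head? = some c →
      l.getLast? = some e → (m e :: (Q ++ [c])).IsChain G.Adj →
      (∀ a ∈ Q, a ∉ l ∧ m a ∉ l) → (Q = [] → e ≠ c) → ∃ x, Rch G m x ⊂ Rch G m c := by
  induction n using Nat.strong_induction_on with
  | _ n ih =>
  intro l e Q hQ hl hc he hch hd hne
  rcases Q with _ | ⟨x, q⟩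
  · exact absurd (by simpa using hch) (hnc l c e hl hc he (hne rfl))
  have hex : G.Adj (m e) x := by
    simp only [List.cons_append, List.isChain_cons_cons] at hch
    exact hch.1
  have hQc : (x :: q ++ [c]).IsChain G.Adj := hch.tail
  by_cases h : ∀ r, AP G m r → r.head? = some x → ∀ y ∈ r, y ∉ l ∧ m y ∉ l
  · refine ⟨x, ?_, ?_⟩
    · rintro y ⟨r, hr, hrx, hy⟩
      refine ⟨l ++ r, hl.append hm hr (h r hr hrx) ?_, by simp [hc], by simp [hy]⟩
      intro a ha b hb
      rw [he] at ha; rw [hrx] at hb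
      cases ha; cases hb; exact hex
    · intro hsub
      have hcl : c ∈ l := List.mem_of_head? hc
      obtain ⟨r, hr, hrx, hy⟩ := hsub (show c ∈ Rch G m c from ⟨l, hl, hc, hcl⟩)
      exact (h r hr hrx c hy).1 hcl
  · push Not at h
    obtain ⟨r, hr, hrx, y, hyr, hy⟩ := h
    obtain ⟨r1, z, r2, rfl, hz, hr1⟩ := exists_first (fun y => y ∈ l ∨ m y ∈ l) r
      ⟨y, hyr, by by_cases h' : y ∈ l <;> simp_all⟩
    have hr1' : ∀ a ∈ r1, a ∉ l ∧ m a ∉ l := fun a ha => by simpa [not_or] using hr1 a ha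
    have hxl := hd x (by simp)
    have hr1x : r1.head? = some x := by
      rcases r1 with _ | ⟨w, r1⟩
      · simp only [List.nil_append, List.head?_cons, Option.some.injEq] at hrx
        subst hrx
        rcases hz with hz | hz
        · exact absurd hz hxl.1
        · exact absurd hz hxl.2
      · simpa using hrx
    have hr1z : ∀ a ∈ r1.getLast?, G.Adj (m a) z := fun a ha =>
      (List.isChain_append.1 hr.1).2.2 a ha z (by simp)
    have hap1 := hr.left
    obtain ⟨u, hu⟩ : ∃ u, r1.getLast? = some u := by
      rcases hh : r1.getLast? with _ | u
      · simp only [List.getLast?_eq_none_iff] at hh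
        simp [hh] at hr1x
      · exact ⟨u, rfl⟩
    have hul : u ∈ r1 := List.mem_of_getLast? hu
    have hlj : ∀ a ∈ l.getLast?, ∀ b ∈ r1.head?, G.Adj (m a) b := by
      intro a ha b hb
      rw [he] at ha; rw [hr1x] at hb
      cases ha; cases hb; exact hex
    by_cases hzl : z ∈ l
    · -- alternating cycle
      exfalso
      obtain ⟨l1, l2, rfl⟩ := List.append_of_mem hzl
      have hA : AP G m (l1 ++ (z :: l2) ++ r1) := hl.append hm hap1 hr1' hlj
      rw [List.append_assoc] at hA
      refine hnc _ z u hA.right (by simp) (by rw [List.getLast?_append, hu]; rfl) ?_ (hr1z u hu)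
      rintro rfl
      exact (hr1' u hul).1 hzl
    have hmz : m z ∈ l := hz.resolve_left hzl
    -- the last vertex of Q on r1
    obtain ⟨q1, t, q2, hq, ht, hq2⟩ := exists_last (fun y => y ∈ r1 ∨ m y ∈ r1) (x :: q)
      ⟨x, by simp, Or.inl (List.mem_of_head? hr1x)⟩
    have hq2' : ∀ a ∈ q2, a ∉ r1 ∧ m a ∉ r1 := fun a ha => by simpa [not_or] using hq2 a ha
    have hq2l : ∀ a ∈ q2, a ∉ l ∧ m a ∉ l := fun a ha => hd a (by rw [hq]; simp [ha])
    have hlen : q2.length < n := by rw [← hQ, hq]; simp; omega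
    have htc : (t :: (q2 ++ [c])).IsChain G.Adj := by
      rw [hq] at hQc
      simp only [List.append_assoc, List.cons_append] at hQc
      exact (List.isChain_append.1 hQc).2.1
    have hcl : c ∈ l := List.mem_of_head? hc
    by_cases htr : t ∈ r1
    · -- go backwards along r1
      obtain ⟨s1, s2, rfl⟩ := List.append_of_mem htr
      obtain ⟨l1, l2, rfl⟩ := List.append_of_mem hmz
      have hl' : AP G m (l1 ++ [m z]) := by
        have : AP G m ((l1 ++ [m z]) ++ l2) := by simpa using hl
        exact this.left
      have hrv := (hap1.right).rev hm
      refine ih _ hlen ((l1 ++ [m z]) ++ ((t :: s2).map m).reverse) (m t) q2 rfl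
        (hl'.append hm hrv ?_ ?_) ?_ ?_ ?_ ?_ ?_
      · intro a ha
        simp only [List.mem_reverse, List.mem_map] at ha
        obtain ⟨b, hb, rfl⟩ := ha
        have := hr1' b (by simp only [List.mem_append]; exact Or.inr hb)
        rw [hm]
        simp only [List.mem_append, List.mem_cons, List.not_mem_nil, or_false] at this ⊢
        clear hr1 hr1' hq2 hq2' hq2l hd hy hz hxl hzl hmz hcl hr hl hap1 ih htr hul ht hyr
        grind
      · intro a ha b hb
        simp only [List.getLast?_append, List.getLast?_singleton, Option.some_or,
          Option.mem_def, Option.some.injEq] at ha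
        subst ha
        simp only [List.head?_reverse, List.getLast?_map, Option.mem_def] at hb
        have hu' : (t :: s2).getLast? = some u := by
          rw [List.getLast?_append] at hu
          cases hh : (t :: s2).getLast? with
          | none => simp at hh
          | some w => rw [hh] at hu; simpa using hu
        rw [hu'] at hb
        simp only [Option.map_some, Option.some.injEq] at hb
        subst hb
        rw [hm]; exact (hr1z u hu).symm
      · rcases l1 with _ | ⟨w, l1⟩ <;> simpa using hc
      · rw [List.getLast?_append]; simp
      · rw [hm]; exact htc
      · intro a ha
        have h1 := hq2' a ha
        have h2 := hq2l a ha
        have hinj : ∀ a b, m b = a ↔ b = m a := fun a b =>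
          ⟨fun h => by rw [← h, hm], fun h => by rw [h, hm]⟩
        simp only [List.mem_append, List.mem_cons, List.mem_reverse, List.mem_map, List.not_mem_nil,
          or_false, hinj, exists_eq_right, hm] at h1 h2 ⊢
        clear hr1 hr1' hq2 hq2' hq2l hd hy hz hxl hzl hmz hcl hr hl hap1 ih htr hul ht hyr
        grind
      · rintro - hh
        have := (hr1' t htr).2
        rw [hh] at this
        exact this hcl
    · have htr' : m t ∈ r1 := ht.resolve_left htr
      obtain ⟨s1, s2, rfl⟩ := List.append_of_mem htr'
      have hA : AP G m ((l ++ (s1 ++ [m t])) ++ s2) := by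
        simpa using hl.append hm hap1 hr1' hlj
      refine ih _ hlen (l ++ (s1 ++ [m t])) (m t) q2 rfl hA.left (by simp [hc]) (by simp)
        (by rw [hm]; exact htc) ?_ ?_
      · intro a ha
        have h1 := hq2' a ha
        have h2 := hq2l a ha
        simp only [List.mem_append, List.mem_cons, List.not_mem_nil, or_false] at h1 h2 ⊢
        clear hr1 hr1' hq2 hq2' hq2l hd hy hz hxl hzl hmz hcl hr hl hap1 ih htr hul ht hyr
        grind
      · rintro - hh
        have := (hr1' (m t) htr').1
        rw [hh] at this
        exact this hcl

theorem exists_bridge [Finite V] [Nonempty V] (hm : ∀ v, m (m v) = v)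
    (hadj : ∀ v, G.Adj v (m v)) (hnc : NoCyc G m) : ∃ c, G.IsBridge s(m c, c) := by
  classical
  obtain ⟨c, hc⟩ := Finite.exists_min (fun c => (Rch G m c).ncard)
  refine ⟨c, ?_⟩
  by_contra hb
  rw [SimpleGraph.isBridge_iff, not_not] at hb
  obtain ⟨p, hp⟩ := hb.exists_isPath
  have hmc : m c ≠ c := (hadj c).ne'
  have hch : p.support.IsChain (G.deleteEdges {s(m c, c)}).Adj := p.isChain_adj_support
  have hnd := hp.support_nodup
  have hsup : ∃ Q, p.support = m c :: (Q ++ [c]) := by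
    rcases hs : p.support with _ | ⟨a, L⟩
    · exact absurd hs p.support_ne_nil
    have h0 : a = m c := by
      have := p.head_support
      simpa [hs] using this
    have h1 := p.getLast_support
    simp only [hs] at h1
    have hL : L ≠ [] := by
      rintro rfl
      simp only [List.getLast_singleton] at h1
      exact hmc (h0.symm.trans h1)
    rw [List.getLast_cons hL] at h1
    refine ⟨L.dropLast, ?_⟩
    have := List.dropLast_append_getLast hL
    rw [h1] at this
    rw [this, h0]
  obtain ⟨Q, hQ⟩ := hsup
  rw [hQ] at hch hnd
  have hex : ∃ x, Rch G m x ⊂ Rch G m c := by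
    refine descent hm hnc c Q.length [c] c Q rfl ⟨by simp, by simp, by simpa using hmc⟩ rfl rfl
      (hch.imp fun a b hab => (SimpleGraph.deleteEdges_le _) hab) ?_ ?_
    · intro a ha
      simp only [List.nodup_cons, List.nodup_append, List.mem_append, List.mem_cons,
        List.not_mem_nil, or_false] at hnd ⊢
      refine ⟨hnd.2.2.2 a ha c rfl, ?_⟩
      intro h
      apply hnd.1
      left
      rwa [← h, hm]
    · rintro rfl
      simp at hch
  obtain ⟨x, hx⟩ := hex
  exact absurd (hc x) (not_le.2 (Set.ncard_lt_ncard hx (Set.toFinite _)))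

theorem cyc_perm [DecidableEq V] (hm : ∀ v, m (m v) = v) (hadj : ∀ v, G.Adj v (m v))
    {l : List V} {c e : V} (hl : AP G m l) (hc : l.head? = some c) (he : l.getLast? = some e)
    (hne : e ≠ c) (hec : G.Adj (m e) c) :
    ∃ m' : V → V, (∀ v, m' (m' v) = v) ∧ (∀ v, G.Adj v (m' v)) ∧ ∃ v, m' v ≠ m v := by
  have hS : ∀ v ∈ l, G.Adj (m v) (l.formPerm v) := by
    intro v hv
    obtain ⟨i, hi, rfl⟩ := List.getElem_of_mem hv
    rw [List.formPerm_apply_getElem _ hl.2.1]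
    rcases Nat.lt_or_ge (i + 1) l.length with h | h
    · simp only [Nat.mod_eq_of_lt h]
      exact hl.1.getElem i h
    · have h1 : i + 1 = l.length := by omega
      simp only [h1, Nat.mod_self]
      have h2 : i = l.length - 1 := by omega
      subst h2
      rw [List.head?_eq_getElem?, List.getElem?_eq_some_iff] at hc
      rw [List.getLast?_eq_getElem?, List.getElem?_eq_some_iff] at he
      obtain ⟨_, hc⟩ := hc
      obtain ⟨_, he⟩ := he
      rw [hc, he]; exact hec
  set σ := l.formPerm with hσ
  have hfix : ∀ v, v ∉ l → σ v = v := fun v hv => List.formPerm_apply_of_notMem hv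
  have hml : ∀ v ∈ l, σ (m v) = m v := fun v hv => hfix _ (hl.2.2 v hv)
  refine ⟨fun v => σ (m (σ.symm v)), fun v => by simp [hm], fun v => ?_, σ e, ?_⟩
  · obtain ⟨w, rfl⟩ := σ.surjective v
    simp only [Equiv.symm_apply_apply]
    by_cases hw : w ∈ l
    · rw [hml w hw]; exact (hS w hw).symm
    · rw [hfix w hw]
      by_cases hw' : m w ∈ l
      · have := hS _ hw'
        rwa [hm] at this
      · rw [hfix _ hw']; exact hadj w
  · have hel : e ∈ l := List.mem_of_getLast? he
    simp only [Equiv.symm_apply_apply]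
    rw [hml e hel]
    intro h
    have h' : e = σ e := by rw [← hm (σ e), ← h, hm]
    have h3 := (List.formPerm_apply_mem_eq_self_iff _ hl.2.1 e hel).1 h'.symm
    match l, h3 with
    | [], _ => simp at hc
    | [a], _ => simp at hc he; exact hne (he.symm.trans hc)

end

end Kotzig

/-- Kotzig's theorem: the unique perfect matching of a nonempty graph contains a bridge. -/
theorem unique_perfect_matching_contains_bridge {V : Type*} [Fintype V] [Nonempty V]
    (G : SimpleGraph V) (M : SimpleGraph.Subgraph G)
    (hM : M.IsPerfectMatching)
    (huniq : ∀ M' : SimpleGraph.Subgraph G, M'.IsPerfectMatching → M' = M) :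
    ∃ e ∈ M.edgeSet, G.IsBridge e := by
  classical
  rw [SimpleGraph.Subgraph.isPerfectMatching_iff] at hM
  choose m hm1 hm2 using hM
  have hm : ∀ v, m (m v) = v := fun v => (hm2 (m v) v (hm1 v).symm).symm
  have hadj : ∀ v, G.Adj v (m v) := fun v => (hm1 v).adj_sub
  have hnc : Kotzig.NoCyc G m := by
    intro l c e hl hc he hne hec
    obtain ⟨m', h1, h2, v, hv⟩ := Kotzig.cyc_perm hm hadj hl hc he hne hec
    let M' : G.Subgraph :=
      { verts := Set.univ
        Adj := fun a b => m' a = b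
        adj_sub := by rintro a b rfl; exact h2 a
        edge_vert := fun _ => Set.mem_univ _
        symm := ⟨fun a b (h : m' a = b) => h ▸ h1 a⟩ }
    have hM' : M' = M := huniq M' (by
      rw [SimpleGraph.Subgraph.isPerfectMatching_iff]
      exact fun v => ⟨m' v, rfl, fun y hy => Eq.symm hy⟩)
    have : M.Adj v (m' v) := by rw [← hM']
    exact hv (hm2 v _ this)
  obtain ⟨c, hc⟩ := Kotzig.exists_bridge hm hadj hnc
  exact ⟨s(m c, c), (hm1 c).symm, hc⟩
end

section
/- If a graph G has no antitriangle (no independent set of size 3) and has exactly one coloring of size χ(G), then G has a shallow clique minor of size χ(G); in particular s(G) ≥ |V(G)|/2. -/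
open SimpleGraph

lemma exists_inv {ι : Type*} [DecidableEq ι] (f : ι → ι) : ∀ (S : Finset ι), S.Nonempty →
    (∀ i ∈ S, f i ∈ S) → ∃ P ⊆ S, P.Nonempty ∧ (∀ i ∈ P, f i ∈ P) ∧ Set.InjOn f P := by
  intro S
  induction S using Finset.strongInduction with
  | H S ih =>
    intro hS hf
    by_cases h : S.image f = S
    · refine ⟨S, subset_rfl, hS, hf, ?_⟩
      apply Finset.card_image_iff.mp
      rw [h]
    · have hsub : S.image f ⊆ S := by
        intro x hx
        obtain ⟨y, hy, rfl⟩ := Finset.mem_image.mp hx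
        exact hf y hy
      obtain ⟨P, hP, h1, h2⟩ := ih (S.image f) (lt_of_le_of_ne hsub h) (hS.image f) (by
        intro i hi
        exact Finset.mem_image_of_mem f (hsub hi))
      exact ⟨P, hP.trans hsub, h1, h2⟩

lemma core_perm {ι : Type*} [DecidableEq ι] (p q r : ι → ι → Prop)
    (psymm : ∀ i j, p i j → p j i) (pirr : ∀ i, ¬ p i i)
    (hpr : ∀ i j, p i j → ¬ r i j)
    (hac : ∀ X : Finset ι, X.Nonempty → ∃ j ∈ X, ∀ k ∈ X, k ≠ j → ¬ q k j) :
    ∀ S : Finset ι, ∃ σ : ι → ι, (∀ i ∈ S, σ i ∈ S) ∧ Set.InjOn σ S ∧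
      (∀ i ∈ S, σ i = i ∨ p i (σ i)) ∧
      ∀ i ∈ S, ∀ k ∈ S, i ≠ k → p i k →
        ((σ i ≠ i ∧ ¬ q k (σ i)) ∨ (σ k ≠ k ∧ ¬ q i (σ k)) ∨
          (σ i ≠ i ∧ σ k ≠ k ∧ ¬ r (σ i) (σ k))) := by
  classical
  intro S
  induction S using Finset.strongInduction with
  | H S ih =>
    rcases S.eq_empty_or_nonempty with rfl | hS
    · exact ⟨id, by simp, by simp, by simp, by simp⟩
    have hex : ∀ i, i ∈ S → ∃ j ∈ S, (j = i ∧ ∀ k ∈ S, ¬ p i k) ∨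
        (p i j ∧ ∀ k ∈ S, k ≠ j → p i k → ¬ q k j) := by
      intro i hi
      rcases (S.filter (fun k => p i k)).eq_empty_or_nonempty with h | h
      · refine ⟨i, hi, Or.inl ⟨rfl, ?_⟩⟩
        intro k hk hp
        have : k ∈ S.filter (fun k => p i k) := by simp [hk, hp]
        rw [h] at this
        simp at this
      · obtain ⟨j, hj, hj2⟩ := hac _ h
        simp only [Finset.mem_filter] at hj hj2
        exact ⟨j, hj.1, Or.inr ⟨hj.2, fun k hk hkj hp => hj2 k ⟨hk, hp⟩ hkj⟩⟩
    choose! f hfS hf using hex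
    obtain ⟨P, hPS, hPne, hPf, hPinj⟩ := exists_inv f S hS hfS
    obtain ⟨τ, h1, h2, h3, h4⟩ := ih (S \ P) (Finset.sdiff_ssubset hPS hPne)
    simp only [Finset.mem_sdiff] at h1 h3 h4
    refine ⟨fun i => if i ∈ P then f i else τ i, ?_, ?_, ?_, ?_⟩
    · intro i hi
      by_cases hP : i ∈ P
      · simp [hP, hfS i hi]
      · simp [hP, (h1 i ⟨hi, hP⟩).1]
    · intro i hi k hk hik
      have hi' : i ∈ S := hi
      have hk' : k ∈ S := hk
      by_cases hP : i ∈ P <;> by_cases hP' : k ∈ P <;> simp only [hP, hP', if_true, if_false] at hik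
      · exact hPinj hP hP' hik
      · exact absurd (hik ▸ hPf i hP) (h1 k ⟨hk', hP'⟩).2
      · exact absurd (hik ▸ hPf k hP') (h1 i ⟨hi', hP⟩).2
      · exact h2 (by simp [hi', hP]) (by simp [hk', hP']) hik
    · intro i hi
      by_cases hP : i ∈ P
      · simp only [hP, if_true]
        rcases hf i hi with h | h
        · exact Or.inl h.1
        · exact Or.inr h.1
      · simp only [hP, if_false]
        exact h3 i ⟨hi, hP⟩
    · intro i hi k hk hik hp
      have hne : ∀ x, p x (f x) → f x ≠ x := by
        intro x hx h
        rw [h] at hx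
        exact pirr _ hx
      by_cases hP : i ∈ P <;> by_cases hP' : k ∈ P <;> simp only [hP, hP', if_true, if_false]
      · rcases hf i hi with h | ⟨ha, hb⟩
        · exact absurd hp (h.2 k hk)
        rcases hf k hk with h | ⟨hc, hd⟩
        · exact absurd (psymm _ _ hp) (h.2 i hi)
        by_cases hkf : k = f i
        · by_cases hif : i = f k
          · refine Or.inr (Or.inr ⟨hne i ha, hne k hc, ?_⟩)
            rw [← hkf, ← hif]
            exact hpr _ _ (psymm _ _ hp)
          · exact Or.inr (Or.inl ⟨hne k hc, hd i hi hif (psymm _ _ hp)⟩)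
        · exact Or.inl ⟨hne i ha, hb k hk hkf hp⟩
      · rcases hf i hi with h | ⟨ha, hb⟩
        · exact absurd hp (h.2 k hk)
        exact Or.inl ⟨hne i ha, hb k hk (fun h => hP' (h ▸ hPf i hP)) hp⟩
      · rcases hf k hk with h | ⟨hc, hd⟩
        · exact absurd (psymm _ _ hp) (h.2 i hi)
        exact Or.inr (Or.inl ⟨hne k hc, hd i hi (fun h => hP (h ▸ hPf k hP')) (psymm _ _ hp)⟩)
      · exact h4 i ⟨hi, hP⟩ k ⟨hk, hP'⟩ hik hp

lemma connSet_single {V : Type*} (G : SimpleGraph V) (x : V) : ConnSet G {x} := by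
  unfold ConnSet
  rw [Finset.coe_singleton]
  haveI : Nonempty (({x} : Set V) : Type _) := ⟨⟨x, rfl⟩⟩
  refine SimpleGraph.Connected.mk ?_
  intro u v
  rw [Subsingleton.elim u v]

lemma connSet_pair {V : Type*} [DecidableEq V] (G : SimpleGraph V) (x y : V) (h : G.Adj x y) :
    ConnSet G {x, y} := by
  unfold ConnSet
  rw [Finset.coe_pair]
  exact SimpleGraph.induce_pair_connected_of_adj h

lemma main_fun {V ι : Type*} [Fintype V] [DecidableEq V] [Fintype ι] [DecidableEq ι]
    (G : SimpleGraph V) (hat : HasNoAntitriangle G) (col : V → ι)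
    (hsurj : Function.Surjective col)
    (hprop : ∀ x y, col x = col y → ¬ G.Adj x y)
    (L : ∀ φ : V → ι, (∀ x y, φ x = φ y → ¬ G.Adj x y) → ∀ x y, φ x = φ y ↔ col x = col y) :
    ∃ K : Finset (Finset V), IsShallowCliqueMinor G K ∧ K.card = Fintype.card ι ∧
      2 * K.card ≥ Fintype.card V := by
  classical
  have tri : ∀ x y z, x ≠ y → y ≠ z → x ≠ z → ¬ G.Adj x y → ¬ G.Adj y z → G.Adj x z := by
    intro x y z hxy hyz hxz h1 h2
    by_contra h3
    apply hat
    refine ⟨{x, y, z}, Finset.card_eq_three.mpr ⟨x, y, z, hxy, hxz, hyz, rfl⟩, ?_⟩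
    intro u hu v hv
    simp only [Finset.mem_insert, Finset.mem_singleton] at hu hv
    rcases hu with rfl | rfl | rfl <;> rcases hv with rfl | rfl | rfl <;>
      first | exact G.irrefl | assumption | (rw [G.adj_comm]; assumption)
  have hab : ∀ i, ∃ a b, ∀ v, col v = i ↔ (v = a ∨ v = b) := by
    intro i
    obtain ⟨a, ha⟩ := hsurj i
    by_cases h : ∃ b, b ≠ a ∧ col b = i
    · obtain ⟨b, hba, hb⟩ := h
      refine ⟨a, b, fun v => ⟨fun hv => ?_, ?_⟩⟩
      · by_contra hc
        push Not at hc
        exact hprop v b (by rw [hv, hb]) (tri v a b hc.1 hba.symm hc.2 (hprop _ _ (by rw [hv, ha]))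
          (hprop _ _ (by rw [hb, ha])))
      · rintro (rfl | rfl) <;> assumption
    · push Not at h
      refine ⟨a, a, fun v => ⟨fun hv => ?_, ?_⟩⟩
      · by_contra hc
        exact h v (by tauto) hv
      · rintro (rfl | rfl) <;> assumption
  choose a b hab using hab
  have ca : ∀ i, col (a i) = i := fun i => (hab i _).2 (Or.inl rfl)
  have cb : ∀ i, col (b i) = i := fun i => (hab i _).2 (Or.inr rfl)
  have single : ∀ k, a k = b k → ∀ y, y ≠ a k → G.Adj (a k) y := by
    intro k hk y hy
    by_contra hn
    have hfib : ∀ v, col v = k → v = a k := by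
      intro v hv
      rcases (hab k v).1 hv with h | h
      · exact h
      · rw [h, hk]
    have := (L (Function.update col y k) (by
      intro u v huv
      by_cases hu : u = y
      · by_cases hv : v = y
        · rw [hu, hv]; exact G.irrefl
        · rw [hu, Function.update_self, Function.update_of_ne hv] at huv
          rw [hu, hfib v huv.symm, G.adj_comm]; exact hn
      · by_cases hv : v = y
        · rw [hv, Function.update_self, Function.update_of_ne hu] at huv
          rw [hv, hfib u huv]; exact hn
        · rw [Function.update_of_ne hv, Function.update_of_ne hu] at huv
          exact hprop u v huv) (a k) y).1 (by
        rw [Function.update_self, Function.update_of_ne (Ne.symm hy), ca])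
    rw [ca] at this
    exact hy (hfib y this.symm)
  have hac : ∀ X : Finset ι, X.Nonempty → ∃ j ∈ X, ∀ k ∈ X, k ≠ j → ¬ ¬ G.Adj (a k) (b j) := by
    intro X hX
    by_contra hcon
    push Not at hcon
    choose! g hgX hgne hg using hcon
    obtain ⟨P, hPX, hPne, hPg, hinj⟩ := exists_inv g X hX hgX
    have key : ∀ x y, x ∈ P → x = col y → y ≠ b x → y = a x := by
      intro x y _ h1 h2
      exact ((hab x y).1 h1.symm).resolve_right h2
    let φ : V → ι := fun v => if col v ∈ P ∧ v = b (col v) then g (col v) else col v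
    have hφ : ∀ x y, φ x = φ y → ¬ G.Adj x y := by
      have half : ∀ x y, (col x ∈ P ∧ x = b (col x)) → ¬ (col y ∈ P ∧ y = b (col y)) →
          g (col x) = col y → ¬ G.Adj x y := by
        intro x y hx hy h
        have hyP : col y ∈ P := h ▸ hPg _ hx.1
        have hya : y = a (col y) := key _ _ hyP rfl (fun h => hy ⟨hyP, h⟩)
        have h5 := hg (col x) (hPX hx.1)
        rw [h, ← hya, ← hx.2, G.adj_comm] at h5
        exact h5
      intro x y h
      simp only [φ] at h
      split_ifs at h with hx hy hy
      · exact hprop x y (hinj hx.1 hy.1 h)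
      · exact half x y hx hy h
      · rw [G.adj_comm]; exact half y x hy hx h.symm
      · exact hprop x y h
    obtain ⟨j, hj⟩ := hPne
    have hjX := hPX hj
    have hns : a (g j) ≠ b (g j) := by
      intro h
      refine hg j hjX (single _ h (b j) ?_)
      intro h2
      have := congrArg col h2
      rw [ca, cb] at this
      exact hgne j hjX this.symm
    have := (L φ hφ (b j) (a (g j))).1 (by
      simp only [φ, ca, cb]
      simp [hj, hns])
    rw [ca, cb] at this
    exact hgne j hjX this.symm
  have hpr : ∀ i j, (i ≠ j ∧ ¬ G.Adj (a i) (a j)) → ¬ ¬ G.Adj (b i) (b j) := by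
    rintro i j ⟨hij, hp⟩ hr
    have haij : a j ≠ a i := fun h => hij (by have := congrArg col h; rw [ca, ca] at this; exact this.symm)
    have hi : a i ≠ b i := fun h => hp (single i h _ haij)
    have hj : a j ≠ b j := fun h => hp (single j h _ haij.symm).symm
    let φ : V → ι := fun v => if v = b i then j else if v = a j then i else col v
    have hne : a j ≠ b i := fun h => hij (by have := congrArg col h; rw [ca, cb] at this; exact this.symm)
    have hφ : ∀ x y, φ x = φ y → ¬ G.Adj x y := by
      have fi : ∀ y, φ y = i → y = a i ∨ y = a j := by
        intro y h
        simp only [φ] at h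
        split_ifs at h with h1 h2
        · exact absurd h.symm hij
        · exact Or.inr h2
        · exact Or.inl (((hab i y).1 h).resolve_right h1)
      have fj : ∀ y, φ y = j → y = b i ∨ y = b j := by
        intro y h
        simp only [φ] at h
        split_ifs at h with h1 h2
        · exact Or.inl h1
        · exact absurd h hij
        · exact Or.inr (((hab j y).1 h).resolve_left h2)
      intro x y h
      by_cases h1 : φ y = i
      · rcases fi y h1 with rfl | rfl <;> rcases fi x (h.trans h1) with rfl | rfl <;>
          first | exact G.irrefl | assumption | (rw [G.adj_comm]; assumption)
      by_cases h2 : φ y = j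
      · rcases fj y h2 with rfl | rfl <;> rcases fj x (h.trans h2) with rfl | rfl <;>
          first | exact G.irrefl | assumption | (rw [G.adj_comm]; assumption)
      have h1' : φ x ≠ i := h ▸ h1
      have h2' : φ x ≠ j := h ▸ h2
      have e : ∀ z, φ z ≠ i → φ z ≠ j → φ z = col z := by
        intro z hz1 hz2
        simp only [φ] at hz1 hz2 ⊢
        split_ifs at hz1 hz2 ⊢ <;> first | rfl | exact absurd rfl hz1 | exact absurd rfl hz2
      rw [e x h1' h2', e y h1 h2] at h
      exact hprop x y h
    have hii : a i ≠ a j := haij.symm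
    have := (L φ hφ (a i) (a j)).1 (by simp [φ, hi, hii, hne, ca])
    rw [ca, ca] at this
    exact hij this
  obtain ⟨σ, -, hinj, hσ, hgood⟩ := core_perm
    (fun i j => i ≠ j ∧ ¬ G.Adj (a i) (a j)) (fun i j => ¬ G.Adj (a i) (b j))
    (fun i j => ¬ G.Adj (b i) (b j))
    (fun i j h => ⟨h.1.symm, fun h' => h.2 h'.symm⟩) (fun i h => h.1 rfl) hpr hac Finset.univ
  simp only [Finset.mem_univ, forall_true_left, not_not] at hσ hgood
  have hinj' : Function.Injective σ := by simpa using hinj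
  have ainj : Function.Injective a := fun i j h => by
    have := congrArg col h; rwa [ca, ca] at this
  have binj : Function.Injective b := fun i j h => by
    have := congrArg col h; rwa [cb, cb] at this
  let M : ι → Finset V := fun i => if σ i = i then {a i} else {a i, b (σ i)}
  have hMmem : ∀ i v, v ∈ M i ↔ v = a i ∨ (σ i ≠ i ∧ v = b (σ i)) := by
    intro i v
    simp only [M]
    split_ifs with h <;> simp [h]
  have hns : ∀ i, σ i ≠ i → a (σ i) ≠ b (σ i) := by
    intro i h h2
    obtain ⟨h3, h4⟩ := (hσ i).resolve_left h
    exact h4 (single _ h2 _ (fun h5 => h3 (ainj h5))).symm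
  have hdis : ∀ i k, i ≠ k → Disjoint (M i) (M k) := by
    have half : ∀ i k, σ k ≠ k → a i ≠ b (σ k) := by
      intro i k hk h
      have h2 := congrArg col h
      rw [ca, cb] at h2
      exact hns k hk (h2 ▸ h)
    intro i k hik
    rw [Finset.disjoint_left]
    intro v hi hk
    rw [hMmem] at hi hk
    rcases hi with rfl | ⟨hi, rfl⟩ <;> rcases hk with h | ⟨hk, h⟩
    · exact hik (ainj h)
    · exact half i k hk h
    · exact half k i hi h.symm
    · exact hik (hinj' (binj h))
  have hMne : ∀ i, (M i).Nonempty := fun i => ⟨a i, (hMmem i _).2 (Or.inl rfl)⟩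
  have hMinj : Function.Injective M := by
    intro i k h
    by_contra hik
    have := hdis i k hik
    rw [h, disjoint_self] at this
    exact (hMne k).ne_empty this
  have hcard : (Finset.univ.image M).card = Fintype.card ι := by
    rw [Finset.card_image_of_injective _ hMinj, Finset.card_univ]
  refine ⟨Finset.univ.image M, ⟨⟨?_, ?_, ?_⟩, ?_⟩, hcard, ?_⟩
  · intro A hA
    obtain ⟨i, -, rfl⟩ := Finset.mem_image.mp hA
    exact hMne i
  · intro A hA
    obtain ⟨i, -, rfl⟩ := Finset.mem_image.mp hA
    simp only [M]
    split_ifs with h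
    · exact connSet_single G _
    · apply connSet_pair
      obtain ⟨h3, h4⟩ := (hσ i).resolve_left h
      refine tri _ (a (σ i)) _ (fun h5 => h3 (ainj h5)) (hns i h) ?_ h4 (hprop _ _ (by rw [ca, cb]))
      intro h5
      have := congrArg col h5
      rw [ca, cb] at this
      exact h3 this
  · intro A hA B hB hAB
    obtain ⟨i, -, rfl⟩ := Finset.mem_image.mp hA
    obtain ⟨k, -, rfl⟩ := Finset.mem_image.mp hB
    have hik : i ≠ k := fun h => hAB (by rw [h])
    refine ⟨hdis i k hik, ?_⟩
    have ma : ∀ i, a i ∈ M i := fun i => (hMmem i _).2 (Or.inl rfl)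
    have mb : ∀ i, σ i ≠ i → b (σ i) ∈ M i := fun i h => (hMmem i _).2 (Or.inr ⟨h, rfl⟩)
    by_cases hadj : G.Adj (a i) (a k)
    · exact ⟨_, ma i, _, ma k, hadj⟩
    rcases hgood i k hik ⟨hik, hadj⟩ with ⟨h1, h2⟩ | ⟨h1, h2⟩ | ⟨h1, h2, h3⟩
    · exact ⟨_, mb i h1, _, ma k, h2.symm⟩
    · exact ⟨_, ma i, _, mb k h1, h2⟩
    · exact ⟨_, mb i h1, _, mb k h2, h3⟩
  · intro A hA
    obtain ⟨i, -, rfl⟩ := Finset.mem_image.mp hA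
    simp only [M]
    split_ifs with h
    · simp
    · exact Finset.card_le_two
  · rw [hcard]
    have hV : (Finset.univ : Finset V) ⊆ Finset.univ.image a ∪ Finset.univ.image b := by
      intro v _
      rcases (hab (col v) v).1 rfl with h | h
      · rw [h]; simp
      · rw [h]; simp
    have h1 := Finset.card_le_card hV
    have h2 := Finset.card_union_le (Finset.univ.image a) (Finset.univ.image b)
    have h3 := Finset.card_image_le (s := Finset.univ) (f := a)
    have h4 := Finset.card_image_le (s := Finset.univ) (f := b)
    simp only [Finset.card_univ] at h1 h3 h4
    omega

/-- no antitriangle and a unique minimum coloring force a shallow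
clique minor of size `χ(G)`; in particular `s(G) ≥ |V(G)|/2`. -/
theorem unique_coloring_shallow_clique_minor {V : Type*} [Fintype V] [DecidableEq V]
    (G : SimpleGraph V) (hat : HasNoAntitriangle G) (c : Finset (Finset V))
    (hmin : MinColoring G c)
    (huniq : ∀ d, IsColoring G d → d.card = c.card → d = c) :
    ∃ K : Finset (Finset V), IsShallowCliqueMinor G K ∧ K.card = c.card ∧
      2 * K.card ≥ Fintype.card V := by 
  classical
  obtain ⟨⟨hne, hdisj, hcov, hanti⟩, hm⟩ := hmin
  choose A hA hvA using hcov
  have huA : ∀ v, ∀ B ∈ c, v ∈ B → B = A v := by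
    intro v B hB hv
    by_contra h
    exact Finset.disjoint_left.mp (hdisj B hB (A v) (hA v) h) hv (hvA v)
  have := main_fun (ι := {B // B ∈ c}) G hat (fun v => ⟨A v, hA v⟩)
    (by
      rintro ⟨B, hB⟩
      obtain ⟨v, hv⟩ := hne B hB
      exact ⟨v, Subtype.ext (huA v B hB hv).symm⟩)
    (by
      intro x y h
      have h' : A x = A y := congrArg Subtype.val h
      exact hanti (A x) (hA x) x (hvA x) y (h' ▸ hvA y))
    (by
      intro φ hφ x y
      let F : {B // B ∈ c} → Finset V := fun i => Finset.univ.filter (fun w => φ w = i)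
      let d : Finset (Finset V) := (Finset.univ.image φ).image F
      have hd : ∀ B, B ∈ d ↔ ∃ v, F (φ v) = B := by
        intro B
        simp [d]
      have hdc : IsColoring G d := by
        refine ⟨?_, ?_, ?_, ?_⟩
        · intro B hB
          obtain ⟨v, rfl⟩ := (hd B).1 hB
          exact ⟨v, by simp [F]⟩
        · intro B hB C hC hBC
          obtain ⟨v, rfl⟩ := (hd B).1 hB
          obtain ⟨w, rfl⟩ := (hd C).1 hC
          rw [Finset.disjoint_left]
          intro u hu hu'
          simp only [F, Finset.mem_filter, Finset.mem_univ, true_and] at hu hu'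
          exact hBC (by rw [← hu, ← hu'])
        · intro v
          exact ⟨F (φ v), (hd _).2 ⟨v, rfl⟩, by simp [F]⟩
        · intro B hB
          obtain ⟨v, rfl⟩ := (hd B).1 hB
          intro u hu w hw
          simp only [F, Finset.mem_filter, Finset.mem_univ, true_and] at hu hw
          exact hφ u w (hu.trans hw.symm)
      have hcard : d.card ≤ c.card := by
        refine Finset.card_image_le.trans ((Finset.card_le_univ _).trans ?_)
        simp
      have hdeq : d = c := huniq d hdc (le_antisymm hcard (hm d hdc))
      constructor
      · intro h
        have hB : F (φ x) ∈ c := hdeq ▸ (hd _).2 ⟨x, rfl⟩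
        exact Subtype.ext ((huA x _ hB (by simp [F])).symm.trans (huA y _ hB (by simp [F, h])))
      · intro h
        have h' : A x = A y := congrArg Subtype.val h
        have hB : A x ∈ d := hdeq.symm ▸ hA x
        obtain ⟨v, hv⟩ := (hd _).1 hB
        have hx : x ∈ F (φ v) := hv ▸ hvA x
        have hy : y ∈ F (φ v) := by rw [hv, h']; exact hvA y
        simp only [F, Finset.mem_filter, Finset.mem_univ, true_and] at hx hy
        exact hx.trans hy.symm)
  simpa using this
end
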